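/- Let (S,d) be a geodesic δ-hyperbolic metric space with basepoint e and let x,y be two points of the Gromov boundary ∂S. Then for every K > 0, every u₁,u₂ ∈ U_{K+6δ}(x), every v₁,v₂ ∈ U_{K+6δ}(y), and all geodesic segments [u₁,v₁] and [u₂,v₂], the set [u₁,v₁] ∩ B(e,K) is contained in the 2δ-neighborhood of [u₂,v₂], where B(e,K) is the open ball of radius K centered at e. -/

import Mathlib

/-!
The quadrilateral with vertices `u₁, v₁, v₂, u₂`, cut along the diagonal `[v₁, u₂]`, is `2δ`-slim,
so a point `z` of `[u₁, v₁]` is `2δ`-close to `[u₂, v₂]` unless it is `2δ`-close to `[u₂, u₁]` or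
`[v₂, v₁]`. Those two sides stay at distance at least `K + 5δ` from `e`
(`far_of_mem_UK`): some `s ∈ S` close to the boundary point has Gromov product greater than
`K + 6δ` with both endpoints, a geodesic `[a, b]` avoids the open ball of radius `(a·b)_e` about
`e`, and the triangle on `s` and the two endpoints is `δ`-slim. Hence neither alternative is
possible when `d(z, e) < K`. Infima of distances need not be known to be attained: slimness is used
up to an arbitrary `ε > 0`.
-/

/-- A geodesic segment from `u` to `v`: the image of an isometric embedding of
`[0, dist u v]` sending the endpoints to `u` and `v`. -/
def IsGeodesicSegment {S : Type*} [MetricSpace S] (Γ : Set S) (u v : S) : Prop :=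
  ∃ γ : ℝ → S, γ 0 = u ∧ γ (dist u v) = v ∧
    (∀ s ∈ Set.Icc (0 : ℝ) (dist u v), ∀ t ∈ Set.Icc (0 : ℝ) (dist u v),
      dist (γ s) (γ t) = |s - t|) ∧
    Γ = γ '' Set.Icc (0 : ℝ) (dist u v)

/-- A geodesic metric space: every pair of points is joined by a geodesic segment. -/
def GeodesicSpace (S : Type*) [MetricSpace S] : Prop :=
  ∀ u v : S, ∃ Γ : Set S, IsGeodesicSegment Γ u v

/-- `δ`-hyperbolicity: every geodesic triangle is `δ`-slim. -/
def DeltaHyperbolic (S : Type*) [MetricSpace S] (δ : ℝ) : Prop :=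
  ∀ x y z : S, ∀ Γ₁ Γ₂ Γ₃ : Set S,
    IsGeodesicSegment Γ₁ x y → IsGeodesicSegment Γ₂ y z → IsGeodesicSegment Γ₃ z x →
    ∀ p ∈ Γ₁, Metric.infDist p (Γ₂ ∪ Γ₃) ≤ δ

/-- The Gromov product of `x` and `y` with respect to the basepoint `e`. -/
noncomputable def gprod {S : Type*} [MetricSpace S] (e x y : S) : ℝ :=
  (dist x e + dist y e - dist x y) / 2

/-- A sequence converges to infinity if its pairwise Gromov products tend to infinity. -/
def ConvToInfty {S : Type*} [MetricSpace S] (e : S) (s : ℕ → S) : Prop :=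
  Filter.Tendsto (fun p : ℕ × ℕ => gprod e (s p.1) (s p.2)) Filter.atTop Filter.atTop

/-- The type of sequences in `S` converging to infinity. -/
def BSeq (S : Type*) [MetricSpace S] (e : S) := {s : ℕ → S // ConvToInfty e s}

/-- Two sequences converging to infinity are equivalent if their mutual Gromov
products tend to infinity. -/
def bequiv {S : Type*} [MetricSpace S] (e : S) (s t : BSeq S e) : Prop :=
  Filter.Tendsto (fun n => gprod e (s.1 n) (t.1 n)) Filter.atTop Filter.atTop

/-- The Gromov boundary of `S` with respect to the basepoint `e`. -/
def GBoundary (S : Type*) [MetricSpace S] (e : S) := Quot (bequiv (S := S) e)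

/-- A sequence in `S` tends to the boundary point `x`. -/
def TendstoBd {S : Type*} [MetricSpace S] (e : S) (s : ℕ → S) (x : GBoundary S e) : Prop :=
  ∃ h : ConvToInfty e s, Quot.mk _ (⟨s, h⟩ : BSeq S e) = x

/-- The Gromov product of a point `u ∈ S` with a boundary point `x`:
the infimum over sequences tending to `x` of the liminf of Gromov products. -/
noncomputable def gprodSB {S : Type*} [MetricSpace S] (e u : S) (x : GBoundary S e) : EReal :=
  sInf {r : EReal | ∃ s : ℕ → S, TendstoBd e s x ∧
    r = Filter.liminf (fun n => (gprod e u (s n) : EReal)) Filter.atTop}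

/-- The Gromov product of two boundary points. -/
noncomputable def gprodBB {S : Type*} [MetricSpace S] (e : S) (x y : GBoundary S e) : EReal :=
  sInf {r : EReal | ∃ s t : ℕ → S, TendstoBd e s x ∧ TendstoBd e t y ∧
    r = Filter.liminf (fun p : ℕ × ℕ => (gprod e (s p.1) (t p.2) : EReal)) Filter.atTop}

/-- `UK e K x = {s ∈ S | (x·s)_e > K}`. -/
def UK {S : Type*} [MetricSpace S] (e : S) (K : ℝ) (x : GBoundary S e) : Set S :=
  {u : S | (K : EReal) < gprodSB e u x}

/-- `d'(x,y) = exp (−ζ (x·y)_e)` on the boundary (equal to `0` when the product is `∞`). -/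
noncomputable def dExp {S : Type*} [MetricSpace S] (e : S) (ζ : ℝ) (x y : GBoundary S e) : ℝ :=
  if gprodBB e x y = ⊤ then 0 else Real.exp (-ζ * (gprodBB e x y).toReal)

/-- The chain metric `ρ(x,y) = inf Σ d'(s_k, s_{k+1})` over finite chains from `x` to `y`. -/
noncomputable def rhoChain {S : Type*} [MetricSpace S] (e : S) (ζ : ℝ)
    (x y : GBoundary S e) : ℝ :=
  sInf {r : ℝ | ∃ (n : ℕ) (c : ℕ → GBoundary S e), c 0 = x ∧ c n = y ∧
    r = ∑ k ∈ Finset.range n, dExp e ζ (c k) (c (k + 1))}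

/-- `ρ` is a metric. -/
def IsMetricFn {B : Type*} (ρ : B → B → ℝ) : Prop :=
  (∀ x y, 0 ≤ ρ x y) ∧ (∀ x y, ρ x y = 0 ↔ x = y) ∧ (∀ x y, ρ x y = ρ y x) ∧
  ∀ x y z, ρ x z ≤ ρ x y + ρ y z

/-- `ζ` is a suitable visual parameter: `ζ > 0`, the associated chain function `ρ` is a
metric on the boundary, and `d'/2 ≤ ρ ≤ d'`. -/
def VisualParam {S : Type*} [MetricSpace S] (e : S) (ζ : ℝ) : Prop :=
  0 < ζ ∧ IsMetricFn (rhoChain e ζ) ∧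
  ∀ x y : GBoundary S e, dExp e ζ x y / 2 ≤ rhoChain e ζ x y ∧ rhoChain e ζ x y ≤ dExp e ζ x y

/-- The topology on the Gromov boundary induced by the visual metric `ρ`. -/
noncomputable def bdTopology (S : Type*) [MetricSpace S] (e : S) (ζ : ℝ) :
    TopologicalSpace (GBoundary S e) :=
  TopologicalSpace.generateFrom
    {B | ∃ (x : GBoundary S e) (ε : ℝ), 0 < ε ∧ B = {y | rhoChain e ζ x y < ε}}

lemma IsGeodesicSegment.left_mem {S : Type*} [MetricSpace S] {Γ : Set S} {u v : S}
    (h : IsGeodesicSegment Γ u v) : u ∈ Γ := by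
  obtain ⟨γ, h0, -, -, rfl⟩ := h
  exact ⟨0, ⟨le_rfl, dist_nonneg⟩, h0⟩

lemma IsGeodesicSegment.dist_add_dist {S : Type*} [MetricSpace S] {Γ : Set S} {u v p : S}
    (h : IsGeodesicSegment Γ u v) (hp : p ∈ Γ) : dist u p + dist p v = dist u v := by
  obtain ⟨γ, h0, h1, hd, rfl⟩ := h
  obtain ⟨t, ht, rfl⟩ := hp
  have e0 := hd 0 ⟨le_rfl, dist_nonneg⟩ t ht
  have e1 := hd t ht (dist u v) ⟨dist_nonneg, le_rfl⟩
  rw [h0, zero_sub, abs_neg, abs_of_nonneg ht.1] at e0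
  rw [h1, abs_of_nonpos (by linarith [ht.2])] at e1
  linarith

lemma gprod_comm' {S : Type*} [MetricSpace S] (e a b : S) : gprod e a b = gprod e b a := by
  simp only [gprod, dist_comm a b]
  ring

/-- A geodesic segment avoids the open ball about `e` whose radius is the Gromov product of its
endpoints. -/
lemma IsGeodesicSegment.gprod_le_dist {S : Type*} [MetricSpace S] {Γ : Set S} {u v p : S} (e : S)
    (h : IsGeodesicSegment Γ u v) (hp : p ∈ Γ) : gprod e u v ≤ dist p e := by
  have h1 := h.dist_add_dist hp
  have h2 := dist_triangle u p e
  have h3 := dist_triangle v p e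
  rw [dist_comm v p] at h3
  unfold gprod
  linarith

/-- Slimness of triangles in terms of points, with an error `ε` since the infimum defining
the distance to the other two sides is not assumed to be attained. -/
lemma DeltaHyperbolic.exists_near {S : Type*} [MetricSpace S] {δ : ℝ} (hhyp : DeltaHyperbolic S δ)
    {a b c : S} {Γ₁ Γ₂ Γ₃ : Set S} (h₁ : IsGeodesicSegment Γ₁ a b) (h₂ : IsGeodesicSegment Γ₂ b c)
    (h₃ : IsGeodesicSegment Γ₃ c a) {p : S} (hp : p ∈ Γ₁) {ε : ℝ} (hε : 0 < ε) :
    ∃ w ∈ Γ₂ ∪ Γ₃, dist p w < δ + ε :=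
  (Metric.infDist_lt_iff ⟨b, Or.inl h₂.left_mem⟩).1
    ((hhyp a b c Γ₁ Γ₂ Γ₃ h₁ h₂ h₃ p hp).trans_lt (by linarith))

lemma eventually_lt_gprod_of_mem_UK {S : Type*} [MetricSpace S] {e u : S} {K : ℝ}
    {x : GBoundary S e} (hu : u ∈ UK e K x) {s : ℕ → S} (hs : TendstoBd e s x) :
    ∀ᶠ n in Filter.atTop, K < gprod e u (s n) := by
  have h : (K : EReal) < Filter.liminf (fun n => (gprod e u (s n) : EReal)) Filter.atTop :=
    lt_of_lt_of_le hu (sInf_le ⟨s, hs, rfl⟩)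
  filter_upwards [Filter.eventually_lt_of_lt_liminf h] with n hn
  exact_mod_cast hn

lemma exists_tendstoBd {S : Type*} [MetricSpace S] {e : S} (x : GBoundary S e) :
    ∃ s : ℕ → S, TendstoBd e s x := by
  obtain ⟨⟨s, hs⟩, rfl⟩ := Quot.exists_rep x
  exact ⟨s, hs, rfl⟩

/-- Geodesics between two points of a neighborhood `U_L(x)` of a boundary point stay far from
the basepoint. -/
lemma far_of_mem_UK {S : Type*} [MetricSpace S] {δ : ℝ} (hgeo : GeodesicSpace S)
    (hhyp : DeltaHyperbolic S δ) {e : S} {x : GBoundary S e} {L : ℝ} {a b : S}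
    (ha : a ∈ UK e L x) (hb : b ∈ UK e L x) {Γ : Set S} (hΓ : IsGeodesicSegment Γ a b)
    {p : S} (hp : p ∈ Γ) : L - δ ≤ dist p e := by
  obtain ⟨s, hs⟩ := exists_tendstoBd x
  obtain ⟨n, hna, hnb⟩ :=
    ((eventually_lt_gprod_of_mem_UK ha hs).and (eventually_lt_gprod_of_mem_UK hb hs)).exists
  obtain ⟨Γ₂, h₂⟩ := hgeo b (s n)
  obtain ⟨Γ₃, h₃⟩ := hgeo (s n) a
  refine le_of_forall_pos_le_add fun ε hε => ?_
  obtain ⟨w, hw, hpw⟩ := hhyp.exists_near hΓ h₂ h₃ hp hε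
  have hwe : L < dist w e := by
    rcases hw with hw | hw
    · exact hnb.trans_le (h₂.gprod_le_dist e hw)
    · rw [gprod_comm'] at hna
      exact hna.trans_le (h₃.gprod_le_dist e hw)
  have := dist_triangle w p e
  rw [dist_comm w p] at this
  linarith

/-- For boundary points `x, y` and every `K > 0`: if
`u₁, u₂ ∈ U_{K+6δ}(x)` and `v₁, v₂ ∈ U_{K+6δ}(y)`, then `[u₁,v₁] ∩ B(e,K)` lies in the
`2δ`-neighborhood of `[u₂,v₂]`. -/
theorem statement18 {S : Type*} [MetricSpace S] (δ : ℝ) (hδ : 0 ≤ δ)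
    (hgeo : GeodesicSpace S) (hhyp : DeltaHyperbolic S δ) (e : S)
    (x y : GBoundary S e) :
    ∀ K : ℝ, 0 < K →
      ∀ u₁ u₂ v₁ v₂ : S, u₁ ∈ UK e (K + 6 * δ) x → u₂ ∈ UK e (K + 6 * δ) x →
        v₁ ∈ UK e (K + 6 * δ) y → v₂ ∈ UK e (K + 6 * δ) y →
        ∀ Γ Δ : Set S, IsGeodesicSegment Γ u₁ v₁ → IsGeodesicSegment Δ u₂ v₂ →
          ∀ z ∈ Γ ∩ Metric.ball e K, Metric.infDist z Δ ≤ 2 * δ := by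
  intro K hK u₁ u₂ v₁ v₂ hu₁ hu₂ hv₁ hv₂ Γ Δ hΓ hΔ z hz
  obtain ⟨hzΓ, hzK⟩ := hz
  rw [Metric.mem_ball] at hzK
  obtain ⟨D, hD⟩ := hgeo v₁ u₂
  obtain ⟨A, hA⟩ := hgeo u₂ u₁
  obtain ⟨B, hB⟩ := hgeo v₂ v₁
  refine le_of_forall_pos_le_add fun η hη => ?_
  -- An error `ε` of at most `(K - d(z, e)) / 2` keeps the sides `A` and `B` out of reach of `z`.
  obtain ⟨ε, hε, hε'⟩ : ∃ ε : ℝ, 0 < ε ∧ 2 * ε ≤ η ∧ 2 * ε ≤ K - dist z e := by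
    refine ⟨min η (K - dist z e) / 2, ?_, ?_, ?_⟩
    · have : 0 < min η (K - dist z e) := lt_min hη (by linarith)
      linarith
    · linarith [min_le_left η (K - dist z e)]
    · linarith [min_le_right η (K - dist z e)]
  obtain ⟨w, hw, hzw⟩ := hhyp.exists_near hΓ hD hA hzΓ hε
  have tw := dist_triangle w z e
  rw [dist_comm w z] at tw
  rcases hw with hw | hw
  · obtain ⟨w', hw', hww'⟩ := hhyp.exists_near hD hΔ hB hw hε
    rcases hw' with hw' | hw'
    · have h1 := Metric.infDist_le_dist_of_mem (x := z) hw'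
      have h2 := dist_triangle z w w'
      linarith [hε'.1]
    · have h1 := far_of_mem_UK hgeo hhyp hv₂ hv₁ hB hw'
      have h2 := dist_triangle w' w e
      rw [dist_comm w' w] at h2
      linarith [hε'.2]
  · have h1 := far_of_mem_UK hgeo hhyp hu₂ hu₁ hA hw
    linarith [hε'.2]
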